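/- arXiv:1501.02212 — 2 statements merged into one kernel-verified Lean document; each statement's English description precedes it below -/
import Mathlib

section
/- Let X, Y be natural numbers with Y ≥ 1 and n = size(Y). Then g^[n](E(X,Y), 2^{3n+1}·X) = (2·X·Y + 2·X + 1, 2·X). -/
/-- The i-th binary digit of `Y` (least significant has index 0). -/
def bit (Y i : ℕ) : ℕ := Y / 2 ^ i % 2

/-- The Loop-I encoding `E(X,Y)`. -/
def E (X Y : ℕ) : ℕ :=
  4 ^ Nat.size Y * (2 * X + 1) +
    ∑ i ∈ Finset.range (Nat.size Y), 2 * 4 ^ (Nat.size Y - 1 - i) * bit Y i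

/-- The Loop-IV step. -/
def g : ℕ × ℕ → ℕ × ℕ := fun p =>
  let a' := p.1 / 2
  let a'' := if Odd a' then a' + p.2 / 4 else a'
  (a'' / 2, p.2 / 8)

theorem digitSum_succ (Y m : ℕ) :
    ∑ i ∈ Finset.range (m + 1), 2 * 4 ^ (m + 1 - 1 - i) * bit Y i =
      4 * (∑ i ∈ Finset.range m, 2 * 4 ^ (m - 1 - i) * bit Y i) + 2 * bit Y m := by
  rw [Finset.sum_range_succ, Finset.mul_sum]
  congr 1
  · apply Finset.sum_congr rfl
    intro i hi
    have hi' := Finset.mem_range.mp hi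
    have h : m + 1 - 1 - i = (m - 1 - i) + 1 := by omega
    rw [h, pow_succ]
    ring
  · simp

theorem g_step (A B d : ℕ) (hd : d = 0 ∨ d = 1) :
    g (4 * A + 2 * d, 8 * B) = (A + d * B, B) := by
  have h1 : (4 * A + 2 * d) / 2 = 2 * A + d := by omega
  have h2 : 8 * B / 4 = 2 * B := by omega
  have h3 : 8 * B / 8 = B := by omega
  simp only [g, h1, h2, h3]
  rcases hd with rfl | rfl
  · rw [if_neg (by rw [Nat.odd_iff]; omega)]
    ext <;> simp
  · rw [if_pos (by rw [Nat.odd_iff]; omega)]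
    ext <;> simp
    omega

theorem g_iter (X Y m : ℕ) : ∀ C : ℕ,
    g^[m] (4 ^ m * C + ∑ i ∈ Finset.range m, 2 * 4 ^ (m - 1 - i) * bit Y i,
      2 ^ (3 * m + 1) * X) = (C + 2 * X * (Y % 2 ^ m), 2 * X) := by
  induction m with
  | zero => intro C; simp [Nat.mod_one]
  | succ m ih =>
    intro C
    rw [digitSum_succ, Function.iterate_succ_apply]
    set S := ∑ i ∈ Finset.range m, 2 * 4 ^ (m - 1 - i) * bit Y i with hS
    have e1 : 4 ^ (m + 1) * C + (4 * S + 2 * bit Y m)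
        = 4 * (4 ^ m * C + S) + 2 * bit Y m := by ring
    have e2 : 2 ^ (3 * (m + 1) + 1) * X = 8 * (2 ^ (3 * m + 1) * X) := by ring
    have e4 : (4 : ℕ) ^ m = 2 ^ (2 * m) := by rw [pow_mul]; norm_num
    have e3 : 4 ^ m * C + S + bit Y m * (2 ^ (3 * m + 1) * X)
        = 4 ^ m * (C + bit Y m * (2 ^ (m + 1) * X)) + S := by
      rw [e4]; ring
    rw [e1, e2, g_step _ _ (bit Y m) (Nat.mod_two_eq_zero_or_one _), e3, ih]
    have e5 : Y % 2 ^ (m + 1) = Y % 2 ^ m + 2 ^ m * bit Y m := by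
      rw [pow_succ, Nat.mod_mul, bit]
    rw [e5]
    ext
    · simp only
      ring
    · rfl

theorem loopIV_exit (X Y : ℕ) (hY : 1 ≤ Y) :
    g^[Nat.size Y] (E X Y, 2 ^ (3 * Nat.size Y + 1) * X) =
      (2 * X * Y + 2 * X + 1, 2 * X) := by
  rw [E, g_iter, Nat.mod_eq_of_lt (Nat.lt_size_self Y)]
  ext
  · simp only
    ring
  · rfl
end

section
/- Let X, Y be natural numbers with Y ≥ 1 and n = size(Y). Let e be the first component of h^[n](2X+1, Y), and let (a, b) = g^[n](e, 2^{3n+1}·X). Then (a − b) / 2 = X·Y, where subtraction is truncated natural-number subtraction and division is floor division. (This is the arithmetic correctness of the whole three-counter multiplication algorithm: after the final adjustments 'A := A − B; B := A; B := B div 2' the output counter holds X·Y.) -/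
/-- The Loop-I step. -/
def h : ℕ × ℕ → ℕ × ℕ := fun p => (4 * p.1 + 2 * (p.2 % 2), p.2 / 2)

theorem h_iter_snd (n A Y : ℕ) : (h^[n] (A, Y)).2 = Y / 2 ^ n := by
  induction n with
  | zero => simp
  | succ n ih =>
    rw [Function.iterate_succ_apply']
    simp only [h] at ih ⊢
    rw [ih, Nat.div_div_eq_div_mul, pow_succ]

theorem h_iter_fst (n A Y : ℕ) :
    (h^[n + 1] (A, Y)).1 = 4 * (h^[n] (A, Y)).1 + 2 * (Y / 2 ^ n % 2) := by
  rw [Function.iterate_succ_apply', ← h_iter_snd n A Y]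
  rfl

theorem g_step_s6 (w c m : ℕ) (hc : c < 2) :
    g (4 * w + 2 * c, 8 * m) = (w + c * m, m) := by
  have h1 : (4 * w + 2 * c) / 2 = 2 * w + c := by omega
  have h2 : 8 * m / 4 = 2 * m := by omega
  have h3 : 8 * m / 8 = m := by omega
  simp only [g, h1, h2, h3, Nat.odd_iff]
  interval_cases c
  · rw [if_neg (by omega)]
    congr 1
    omega
  · rw [if_pos (by omega)]
    congr 1
    omega

theorem g_h_iter (n A X Y : ℕ) : ∀ Z : ℕ,
    g^[n] ((h^[n] (A, Y)).1 + 4 ^ n * Z, 2 ^ (3 * n + 1) * X) =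
      (A + Z + 2 * X * (Y % 2 ^ n), 2 * X) := by
  induction n with
  | zero => intro Z; simp [Nat.mod_one]
  | succ n ih =>
    intro Z
    have hc : Y / 2 ^ n % 2 < 2 := Nat.mod_lt _ (by norm_num)
    rw [Function.iterate_succ_apply, h_iter_fst, Nat.mod_pow_succ]
    generalize Y / 2 ^ n % 2 = c at hc ⊢
    have e1 : 4 * (h^[n] (A, Y)).1 + 2 * c + 4 ^ (n + 1) * Z
        = 4 * ((h^[n] (A, Y)).1 + 4 ^ n * Z) + 2 * c := by ring
    have e2 : 2 ^ (3 * (n + 1) + 1) * X = 8 * (2 ^ (3 * n + 1) * X) := by ring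
    have e4 : (4 : ℕ) ^ n = 2 ^ n * 2 ^ n := by
      rw [← mul_pow]; norm_num
    have e3 : (h^[n] (A, Y)).1 + 4 ^ n * Z + c * (2 ^ (3 * n + 1) * X)
        = (h^[n] (A, Y)).1 + 4 ^ n * (Z + c * (2 * 2 ^ n * X)) := by
      rw [e4]; ring
    rw [e1, e2, g_step_s6 _ _ _ hc, e3, ih]
    congr 1
    ring

theorem mult_correct (X Y : ℕ) (hY : 1 ≤ Y) :
    ((g^[Nat.size Y] ((h^[Nat.size Y] (2 * X + 1, Y)).1,
        2 ^ (3 * Nat.size Y + 1) * X)).1 -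
      (g^[Nat.size Y] ((h^[Nat.size Y] (2 * X + 1, Y)).1,
        2 ^ (3 * Nat.size Y + 1) * X)).2) / 2 = X * Y := by
  have key := g_h_iter (Nat.size Y) (2 * X + 1) X Y 0
  rw [Nat.mod_eq_of_lt (Nat.lt_size_self Y), mul_zero, add_zero, add_zero] at key
  rw [key]
  simp only [mul_assoc]
  omega
end
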